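/- (Exponential utility risk preservation under isotopic lumping.) In a finite Markov reward process (S, p, μ, r) with two distinct isotopic states x_i, x_j, let (S', p', μ', r') be the lumped Markov reward process obtained by collapsing x_j into x_i. Then for every horizon N ≥ 1, every discount factor γ ∈ (0,1), and every nonzero risk parameter β ∈ ℝ, the exponential utility risk of the discounted return is preserved: β⁻¹ · log E[exp(β · Φ_N)] = β⁻¹ · log E[exp(β · Φ'_N)], where Φ_N = Σ_{t=1}^{N} γ^{t−1} r(X_t) and Φ'_N = Σ_{t=1}^{N} γ^{t−1} r'(X'_t). -/

import Mathlib

/-! Collapsing `xj` into `xi` is a strong lumping. Isotopy says that `p xi` and `p xj` agree off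
`{xi, xj}`, and both have total mass one, so their images under the collapse map coincide.
Hence collapsing after one step of the original chain is the same as one step of the lumped
chain from the collapsed state, and by induction the image of the trajectory law is the
trajectory law of the lumped chain (`traj_map_collapse`). Since the reward factors through the
collapse map, the discounted return has the same law for both chains, and therefore the same
exponential utility risk. -/


noncomputable section

/-- The joint law `Traj_{n+1}(μ, p)` of the first `n+1` states of a Markov chain with
initial distribution `μ` and transition kernel `p`, defined by iterated `PMF.bind`. -/
def traj {S : Type} (p : S → PMF S) (μ : PMF S) : (n : ℕ) → PMF (Fin (n + 1) → S)
  | 0 => μ.map fun x => fun _ => x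
  | n + 1 => (traj p μ n).bind fun f => (p (f (Fin.last n))).map fun y => Fin.snoc f y

/-- The collapse map into the lumped state space `S' = {s : S // s ≠ xj}`. -/
def collapse {S : Type} (xi xj : S) (hne : xi ≠ xj) [DecidableEq S] (x : S) :
    {s : S // s ≠ xj} :=
  if h : x = xj then ⟨xi, hne⟩ else ⟨x, h⟩

/-- The lumped kernel on `S' = {s : S // s ≠ xj}`. -/
def lumpedKernel {S : Type} [DecidableEq S] (p : S → PMF S) (xi xj : S) (hne : xi ≠ xj) :
    {s : S // s ≠ xj} → PMF {s : S // s ≠ xj} :=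
  fun x => PMF.map (collapse xi xj hne) (p x.val)

/-- The expectation `E[g(Φ)]` where `Φ` has law `q`. -/
def pmfE (q : PMF ℝ) (g : ℝ → ℝ) : ℝ := ∑' x : ℝ, (q x).toReal * g x

/-- The law of the discounted return `Φ_{n+1} = Σ_{t=1}^{n+1} γ^{t−1} r(X_t)`. -/
def returnLaw {S : Type} (p : S → PMF S) (μ : PMF S) (r : S → ℝ) (γ : ℝ) (n : ℕ) :
    PMF ℝ :=
  PMF.map (fun f => ∑ t : Fin (n + 1), γ ^ (t : ℕ) * r (f t)) (traj p μ n)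

/-- Two probability mass functions that agree off one point are equal, because the mass at that
point is one minus the rest. -/
theorem pmf_eq_of_eq_off_point {T : Type} (q q' : PMF T) (a : T)
    (h : ∀ y, y ≠ a → q y = q' y) : q = q' := by
  classical
  have hrest : (∑' y, if y = a then 0 else q y) = ∑' y, if y = a then 0 else q' y := by
    refine tsum_congr fun y => ?_
    split_ifs with hy
    · rfl
    · exact h y hy
  have e := q.tsum_coe
  have e' := q'.tsum_coe
  rw [ENNReal.tsum_eq_add_tsum_ite a] at e e'
  have hfin : (∑' y, if y = a then 0 else q' y) ≠ ⊤ :=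
    ne_top_of_le_ne_top ENNReal.one_ne_top (e' ▸ le_add_self)
  ext y
  by_cases hy : y = a
  · subst hy
    rw [hrest, ← e'] at e
    exact (ENNReal.add_left_inj hfin).1 e
  · exact h y hy

section
variable {S : Type} [DecidableEq S] (p : S → PMF S) (xi xj : S) (hne : xi ≠ xj)

theorem collapse_target : collapse xi xj hne xj = ⟨xi, hne⟩ := by
  simp [collapse]

theorem collapse_of_ne {x : S} (h : x ≠ xj) : collapse xi xj hne x = ⟨x, h⟩ := by
  simp [collapse, h]

theorem map_collapse_eq (hp : ∀ y : S, y ≠ xi → y ≠ xj → p xi y = p xj y) :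
    (p xi).map (collapse xi xj hne) = (p xj).map (collapse xi xj hne) := by
  refine pmf_eq_of_eq_off_point _ _ ⟨xi, hne⟩ fun y hy => ?_
  simp only [PMF.map_apply]
  refine tsum_congr fun a => ?_
  split_ifs with h
  · refine hp a ?_ ?_
    · rintro rfl
      exact hy (h.trans (collapse_of_ne _ _ hne hne))
    · rintro rfl
      exact hy (h.trans (collapse_target _ _ hne))
  · rfl

/-- The intertwining relation of the lumping: one step of the original chain followed by the
collapse is one step of the lumped chain from the collapsed state. -/
theorem lumpedKernel_collapse (hp : ∀ y : S, y ≠ xi → y ≠ xj → p xi y = p xj y) (x : S) :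
    lumpedKernel p xi xj hne (collapse xi xj hne x) = (p x).map (collapse xi xj hne) := by
  by_cases h : x = xj
  · subst h
    rw [collapse_target]
    exact map_collapse_eq p xi x hne hp
  · rw [collapse_of_ne _ _ hne h]
    rfl

theorem traj_map_collapse (hp : ∀ y : S, y ≠ xi → y ≠ xj → p xi y = p xj y)
    (μ : PMF S) (n : ℕ) :
    (traj p μ n).map (fun f => collapse xi xj hne ∘ f)
      = traj (lumpedKernel p xi xj hne) (μ.map (collapse xi xj hne)) n := by
  induction n with
  | zero =>
    simp only [traj, PMF.map_comp]
    rfl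
  | succ n ih =>
    simp only [traj]
    rw [← ih, PMF.map_bind, PMF.bind_map]
    congr 1
    funext f
    simp only [Function.comp_apply]
    rw [lumpedKernel_collapse p xi xj hne hp, PMF.map_comp, PMF.map_comp]
    congr 1
    funext y
    exact Fin.comp_snoc (α := S) (collapse xi xj hne) f y

end

/-- exponential utility risk preservation under isotopic lumping: if the
two distinct states `xi`, `xj` are isotopic, then for every horizon `N = n + 1 ≥ 1`,
every discount factor `γ ∈ (0,1)` and every nonzero risk parameter `β`, the exponential
utility risk `β⁻¹ log E[exp(β Φ_N)]` of the discounted return is the same for the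
original chain and for the lumped chain. -/
theorem sat_isotopic_lumping_exponential_utility_risk
    {S : Type} [Fintype S] [Nonempty S] [DecidableEq S]
    (p : S → PMF S) (μ : PMF S) (r : S → ℝ)
    (xi xj : S) (hne : xi ≠ xj)
    (hr : r xi = r xj)
    (hp : ∀ y : S, y ≠ xi → y ≠ xj → p xi y = p xj y)
    (γ : ℝ) (hγ0 : 0 < γ) (hγ1 : γ < 1) (β : ℝ) (hβ : β ≠ 0) :
    ∀ n : ℕ,
      β⁻¹ * Real.log (pmfE (returnLaw p μ r γ n) (fun x => Real.exp (β * x)))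
        = β⁻¹ * Real.log (pmfE (returnLaw (lumpedKernel p xi xj hne)
            (PMF.map (collapse xi xj hne) μ) (fun x => r x.val) γ n)
            (fun x => Real.exp (β * x))) := by
  intro n
  have hr' : ∀ x, r (collapse xi xj hne x).val = r x := by
    intro x
    by_cases h : x = xj
    · rw [h, collapse_target, hr]
    · rw [collapse_of_ne _ _ hne h]
  have hlaw : returnLaw (lumpedKernel p xi xj hne) (PMF.map (collapse xi xj hne) μ)
      (fun x => r x.val) γ n = returnLaw p μ r γ n := by
    simp only [returnLaw]
    rw [← traj_map_collapse p xi xj hne hp, PMF.map_comp]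
    congr 1
    funext f
    simp only [Function.comp_apply, hr']
  rw [hlaw]
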